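/- arXiv:1108.5415 — 3 statements merged into one kernel-verified Lean document; each statement's English description precedes it below -/
import Mathlib

section
/- Fix real numbers a, b with 0 < b < a − 2. There exists N such that for all n ≥ N the following holds. Let x, y ∈ M_n satisfy max_{i,k} |x[i,k] − y[i,k]| ≤ n^{−a} and min_{i,k} min(x[i,k], y[i,k], 2 − x[i,k], 2 − y[i,k]) ≥ n^{−b}. Fix a subset S ⊂ {1,…,n} and indices i ∈ S, j ∉ S. Then there exists a coupling (λ_x, λ_y) of two uniform random variables on [0,1] (a probability measure on [0,1]² with both coordinate marginals equal to Lebesgue measure on [0,1]) such that, letting x' be x updated at the pair (i,j) with λ_x via the Gibbs-sampler update rule and y' be y updated at (i,j) with λ_y, we have P[∑_{s∈S} x'[s,1] = ∑_{s∈S} y'[s,1]] ≥ 1 − 4·n^{b+2−a}. -/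
open MeasureTheory

noncomputable section

/-- Uniform probability measure on a finset. -/
def unifOn {α : Type*} [MeasurableSpace α] (s : Finset α) : Measure α :=
  (s.card : ENNReal)⁻¹ • ∑ a ∈ s, Measure.dirac a

/-- Total variation distance between two measures. -/
def tvDist {α : Type*} [MeasurableSpace α] (μ ν : Measure α) : ℝ :=
  ⨆ A : {A : Set α // MeasurableSet A}, ((μ A).toReal - (ν A).toReal)

/-- The set `M_n` of nonnegative `n × 2` matrices with row sums `2` and column sums `n`. -/
def MSet (n : ℕ) : Set (Fin n × Fin 2 → ℝ) :=
  {x | (∀ p, 0 ≤ x p) ∧ (∀ i : Fin n, x (i, 0) + x (i, 1) = 2) ∧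
    (∀ j : Fin 2, ∑ i : Fin n, x (i, j) = n)}

/-- The uniform (normalized `(n-1)`-dimensional Hausdorff) measure on `M_n`. -/
def UM (n : ℕ) : Measure (Fin n × Fin 2 → ℝ) :=
  (μH[(n : ℝ) - 1] (MSet n))⁻¹ • (μH[(n : ℝ) - 1]).restrict (MSet n)

/-- One step of the Gibbs sampler on `M_n`, updating the pair of rows `u.1 = (i, j)`
using the uniform variable `u.2 = λ`. -/
def stepM (n : ℕ) (x : Fin n × Fin 2 → ℝ) (u : (Fin n × Fin n) × ℝ) :
    Fin n × Fin 2 → ℝ := fun p =>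
  let i := u.1.1
  let j := u.1.2
  let l := u.2
  let d := 2 - x (i, 0) - x (j, 0)
  if p = (i, 0) then (if 0 ≤ d then l * (2 - d) else 2 * l - (1 - l) * d)
  else if p = (j, 0) then (if 0 ≤ d then (1 - l) * (2 - d) else 2 * (1 - l) - l * d)
  else if p = (i, 1) then (if 0 ≤ d then 2 * (1 - l) + l * d else (1 - l) * (2 + d))
  else if p = (j, 1) then (if 0 ≤ d then 2 * l + (1 - l) * d else l * (2 + d))
  else x p

/-- The set of ordered pairs `(i, j)` with `i < j`. -/
def pairsF (n : ℕ) : Finset (Fin n × Fin n) := Finset.univ.filter fun p => p.1 < p.2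

/-- Law of the random update datum: `(i, j)` uniform among pairs `i < j`, and
`λ` uniform on `[0,1]`. -/
def driveM (n : ℕ) : Measure ((Fin n × Fin n) × ℝ) :=
  (unifOn (pairsF n)).prod ((volume : Measure ℝ).restrict (Set.Icc 0 1))

/-- Law of the Gibbs sampler on `M_n` after `T` steps started at `x`. -/
def lawM (n : ℕ) (x : Fin n × Fin 2 → ℝ) (T : ℕ) : Measure (Fin n × Fin 2 → ℝ) :=
  Measure.map (fun ω : Fin T → (Fin n × Fin n) × ℝ => (List.ofFn ω).foldl (stepM n) x)
    (Measure.pi fun _ => driveM n)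

/-- Law of the `(T+1)`-step path of the Gibbs sampler on `M_n` with initial distribution `μ`. -/
def pathM (n T : ℕ) (μ : Measure (Fin n × Fin 2 → ℝ)) :
    Measure (Fin (T + 1) → Fin n × Fin 2 → ℝ) :=
  Measure.map (fun p : (Fin n × Fin 2 → ℝ) × (Fin T → (Fin n × Fin n) × ℝ) =>
      fun s : Fin (T + 1) => ((List.ofFn p.2).take s).foldl (stepM n) p.1)
    (μ.prod (Measure.pi fun _ => driveM n))


/-- A subcoupling with marginals dominated by a probability measure extends to a coupling. -/
lemma exists_coupling_ge (v : Measure ℝ) [IsProbabilityMeasure v] (g : Measure (ℝ × ℝ))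
    [IsFiniteMeasure g] (h1 : g.map Prod.fst ≤ v) (h2 : g.map Prod.snd ≤ v) :
    ∃ μ : Measure (ℝ × ℝ), IsProbabilityMeasure μ ∧ μ.map Prod.fst = v ∧ μ.map Prod.snd = v ∧
      g ≤ μ := by
  have e1 : v - g.map Prod.fst + g.map Prod.fst = v := Measure.sub_add_cancel_of_le h1
  have e2 : v - g.map Prod.snd + g.map Prod.snd = v := Measure.sub_add_cancel_of_le h2
  set r1 := v - g.map Prod.fst with hr1
  set r2 := v - g.map Prod.snd with hr2
  have m1 : r1 Set.univ + g Set.univ = 1 := by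
    have := congrArg (fun m => m Set.univ) e1
    simpa [Measure.map_apply measurable_fst MeasurableSet.univ] using this
  have m2 : r2 Set.univ + g Set.univ = 1 := by
    have := congrArg (fun m => m Set.univ) e2
    simpa [Measure.map_apply measurable_snd MeasurableSet.univ] using this
  have m12 : r1 Set.univ = r2 Set.univ :=
    (ENNReal.add_left_inj (measure_ne_top g Set.univ)).1 (m1.trans m2.symm)
  have mt : r1 Set.univ ≠ ⊤ := measure_ne_top r1 Set.univ
  have key1 : ((r1 Set.univ)⁻¹ • r1.prod r2).map Prod.fst = r1 := by
    rw [Measure.map_smul, Measure.map_fst_prod, ← m12, smul_smul]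
    by_cases h0 : r1 Set.univ = 0
    · rw [Measure.measure_univ_eq_zero.1 h0]; simp
    · rw [ENNReal.inv_mul_cancel h0 mt, one_smul]
  have key2 : ((r1 Set.univ)⁻¹ • r1.prod r2).map Prod.snd = r2 := by
    rw [Measure.map_smul, Measure.map_snd_prod, smul_smul]
    by_cases h0 : r1 Set.univ = 0
    · rw [Measure.measure_univ_eq_zero.1 (m12.symm.trans h0)]; simp
    · rw [ENNReal.inv_mul_cancel h0 mt, one_smul]
  have f1 : ((r1 Set.univ)⁻¹ • r1.prod r2 + g).map Prod.fst = v := by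
    rw [Measure.map_add _ _ measurable_fst, key1, e1]
  refine ⟨(r1 Set.univ)⁻¹ • r1.prod r2 + g, ⟨?_⟩, f1, ?_, ?_⟩
  · have := congrArg (fun m => m Set.univ) f1
    simp only [Measure.map_apply measurable_fst MeasurableSet.univ, Set.preimage_univ] at this
    rw [this]; exact measure_univ
  · rw [Measure.map_add _ _ measurable_snd, key2, e2]
  · exact Measure.le_add_left le_rfl

lemma map_affine_le (A W M : ℝ) (hW : 0 < W) (hM : W ≤ M) (K : Set ℝ)
    (hKA : K ⊆ Set.Icc A (A + W)) :
    (ENNReal.ofReal (1 / M) • (volume : Measure ℝ).restrict K).map (fun z => (z - A) / W) ≤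
      (volume : Measure ℝ).restrict (Set.Icc 0 1) := by
  have hf : Measurable (fun z : ℝ => (z - A) / W) := by fun_prop
  have hM0 : 0 < M := hW.trans_le hM
  refine Measure.le_iff.2 fun s hs => ?_
  rw [Measure.map_apply hf hs, Measure.smul_apply, smul_eq_mul, Measure.restrict_apply (hf hs),
    Measure.restrict_apply hs]
  have hsub : (fun z : ℝ => (z - A) / W) ⁻¹' s ∩ K ⊆
      (fun z => z + (-A)) ⁻¹' ((fun z => z * W⁻¹) ⁻¹' (s ∩ Set.Icc 0 1)) := by
    rintro z ⟨hz, hzK⟩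
    have := hKA hzK
    simp only [Set.mem_preimage, Set.mem_inter_iff, Set.mem_Icc] at *
    refine ⟨by simpa [div_eq_mul_inv, sub_eq_add_neg] using hz, ?_, ?_⟩
    · exact mul_nonneg (by linarith) (by positivity)
    · rw [← div_eq_mul_inv, div_le_one hW]; linarith
  have hv := measure_mono (μ := (volume : Measure ℝ)) hsub
  rw [measure_preimage_add_right, Real.volume_preimage_mul_right (inv_ne_zero hW.ne'), inv_inv,
    abs_of_pos hW] at hv
  calc _ ≤ ENNReal.ofReal (1 / M) * (ENNReal.ofReal W * volume (s ∩ Set.Icc 0 1)) := by gcongr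
    _ = ENNReal.ofReal (1 / M * W) * volume (s ∩ Set.Icc 0 1) := by
      rw [← mul_assoc, ENNReal.ofReal_mul (by positivity)]
    _ ≤ 1 * volume (s ∩ Set.Icc 0 1) := by
      gcongr
      rw [ENNReal.ofReal_le_one, one_div, ← div_eq_inv_mul, div_le_one hM0]
      exact hM
    _ = _ := one_mul _

/-- Coupling of two uniform variables on intervals. -/
lemma affine_coupling (A W A' W' : ℝ) (hW : 0 < W) (hW' : 0 < W') :
    ∃ μ : Measure (ℝ × ℝ), IsProbabilityMeasure μ ∧
      μ.map Prod.fst = (volume : Measure ℝ).restrict (Set.Icc 0 1) ∧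
      μ.map Prod.snd = (volume : Measure ℝ).restrict (Set.Icc 0 1) ∧
      ENNReal.ofReal (1 - (|A - A'| + |A + W - (A' + W')|) / max W W') ≤
        μ {l | A + l.1 * W = A' + l.2 * W'} := by
  set M := max W W' with hMdef
  have hM0 : 0 < M := lt_max_of_lt_left hW
  set K := Set.Icc (max A A') (min (A + W) (A' + W')) with hK
  set ρ := ENNReal.ofReal (1 / M) • (volume : Measure ℝ).restrict K with hρ
  have hKfin : volume K ≠ ⊤ := by rw [hK, Real.volume_Icc]; exact ENNReal.ofReal_ne_top
  have : IsFiniteMeasure ((volume : Measure ℝ).restrict K) :=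
    isFiniteMeasure_restrict.2 hKfin
  have : IsFiniteMeasure ρ := Measure.smul_finite _ ENNReal.ofReal_ne_top
  have : IsProbabilityMeasure ((volume : Measure ℝ).restrict (Set.Icc 0 1)) := ⟨by simp⟩
  set f : ℝ → ℝ × ℝ := fun z => ((z - A) / W, (z - A') / W') with hfdef
  have hf : Measurable f := by fun_prop
  obtain ⟨μ, hp, hm1, hm2, hge⟩ := exists_coupling_ge
    ((volume : Measure ℝ).restrict (Set.Icc 0 1)) (ρ.map f)
    (by
      rw [Measure.map_map measurable_fst hf]
      exact map_affine_le A W M hW (le_max_left _ _) K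
        (Set.Icc_subset_Icc (le_max_left _ _) (min_le_left _ _)))
    (by
      rw [Measure.map_map measurable_snd hf]
      exact map_affine_le A' W' M hW' (le_max_right _ _) K
        (Set.Icc_subset_Icc (le_max_right _ _) (min_le_right _ _)))
  refine ⟨μ, hp, hm1, hm2, le_trans ?_ (hge _)⟩
  have hE : MeasurableSet {l : ℝ × ℝ | A + l.1 * W = A' + l.2 * W'} :=
    measurableSet_eq_fun (by fun_prop) (by fun_prop)
  rw [Measure.map_apply hf hE]
  have huniv : f ⁻¹' {l : ℝ × ℝ | A + l.1 * W = A' + l.2 * W'} = Set.univ := by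
    ext z
    simp only [Set.mem_preimage, Set.mem_ofPred_eq, Set.mem_univ, iff_true, hfdef]
    rw [div_mul_cancel₀ _ hW.ne', div_mul_cancel₀ _ hW'.ne']; ring
  rw [huniv, hρ, Measure.smul_apply, smul_eq_mul, Measure.restrict_apply_univ, hK,
    Real.volume_Icc, ← ENNReal.ofReal_mul (by positivity)]
  apply ENNReal.ofReal_le_ofReal
  rw [one_div, ← div_eq_inv_mul, le_div_iff₀ hM0, sub_mul, div_mul_cancel₀ _ hM0.ne', one_mul]
  have h1 := abs_le.1 (le_refl |A - A'|)
  have h2 := abs_le.1 (le_refl |A + W - (A' + W')|)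
  rcases max_cases W W' with h | h <;> rcases max_cases A A' with h' | h' <;>
    rcases min_cases (A + W) (A' + W') with h'' | h'' <;> linarith [abs_nonneg (A - A'),
      abs_nonneg (A + W - (A' + W'))]

lemma sum_stepM (n : ℕ) (x : Fin n × Fin 2 → ℝ) (S : Finset (Fin n)) (i j : Fin n)
    (hi : i ∈ S) (hj : j ∉ S) (l : ℝ) :
    ∑ s ∈ S, stepM n x ((i, j), l) (s, 0) =
      (∑ s ∈ S.erase i, x (s, 0) + max 0 (-(2 - x (i, 0) - x (j, 0)))) +
        l * (2 - |2 - x (i, 0) - x (j, 0)|) := by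
  rw [← Finset.add_sum_erase S _ hi]
  have h : ∑ s ∈ S.erase i, stepM n x ((i, j), l) (s, 0) = ∑ s ∈ S.erase i, x (s, 0) := by
    refine Finset.sum_congr rfl fun s hs => ?_
    have h1 : s ≠ i := Finset.ne_of_mem_erase hs
    have h2 : s ≠ j := fun h => hj (h ▸ Finset.mem_of_mem_erase hs)
    simp [stepM, h1, h2]
  rw [h]
  have h0 : stepM n x ((i, j), l) (i, 0) = max 0 (-(2 - x (i, 0) - x (j, 0))) +
      l * (2 - |2 - x (i, 0) - x (j, 0)|) := by
    simp only [stepM, if_true]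
    split_ifs with hd
    · rw [abs_of_nonneg hd, max_eq_left (by linarith)]; ring
    · rw [abs_of_neg (by linarith), max_eq_right (by linarith)]; ring
  rw [h0]; ring

/-- Subset-coupling lemma on narrow matrices: for all sufficiently large `n`, for nearby
points bounded away from the boundary there is a coupling of the uniform update variables
making the `S`-weights of the first columns agree with probability `≥ 1 - 4 n^{b+2-a}`. -/
theorem narrow_matrices_subset_coupling
    (a b : ℝ) (hb : 0 < b) (hba : b < a - 2) :
    ∃ N : ℕ, ∀ n ≥ N, ∀ x y : Fin n × Fin 2 → ℝ, x ∈ MSet n → y ∈ MSet n →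
      (∀ q, |x q - y q| ≤ (n : ℝ) ^ (-a)) →
      (∀ q, (n : ℝ) ^ (-b) ≤ x q ∧ (n : ℝ) ^ (-b) ≤ y q ∧
        (n : ℝ) ^ (-b) ≤ 2 - x q ∧ (n : ℝ) ^ (-b) ≤ 2 - y q) →
      ∀ S : Finset (Fin n), ∀ i ∈ S, ∀ j ∉ S,
        ∃ μ : Measure (ℝ × ℝ),
          IsProbabilityMeasure μ ∧
          μ.map Prod.fst = (volume : Measure ℝ).restrict (Set.Icc 0 1) ∧
          μ.map Prod.snd = (volume : Measure ℝ).restrict (Set.Icc 0 1) ∧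
          ENNReal.ofReal (1 - 4 * (n : ℝ) ^ (b + 2 - a)) ≤
            μ {l | ∑ s ∈ S, stepM n x ((i, j), l.1) (s, 0) =
                   ∑ s ∈ S, stepM n y ((i, j), l.2) (s, 0)} := by
  refine ⟨1, fun n hn x y hx hy hxy hbd S i hi j hj => ?_⟩
  have hn1 : (1 : ℝ) ≤ n := by exact_mod_cast hn
  have hn0 : (0 : ℝ) < n := by linarith
  simp only [sum_stepM n _ S i j hi hj]
  set e := (n : ℝ) ^ (-a) with he
  set t := (n : ℝ) ^ (-b) with ht
  have he0 : 0 < e := Real.rpow_pos_of_pos hn0 _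
  have ht0 : 0 < t := Real.rpow_pos_of_pos hn0 _
  have hWx : 2 * t ≤ 2 - |2 - x (i, 0) - x (j, 0)| := by
    obtain ⟨p1, -, p2, -⟩ := hbd (i, 0)
    obtain ⟨q1, -, q2, -⟩ := hbd (j, 0)
    rcases abs_cases (2 - x (i, 0) - x (j, 0)) with h | h <;> linarith
  have hWy : 2 * t ≤ 2 - |2 - y (i, 0) - y (j, 0)| := by
    obtain ⟨-, p1, -, p2⟩ := hbd (i, 0)
    obtain ⟨-, q1, -, q2⟩ := hbd (j, 0)
    rcases abs_cases (2 - y (i, 0) - y (j, 0)) with h | h <;> linarith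
  have hC : |∑ s ∈ S.erase i, x (s, 0) - ∑ s ∈ S.erase i, y (s, 0)| ≤ n * e := by
    rw [← Finset.sum_sub_distrib]
    refine (Finset.abs_sum_le_sum_abs _ _).trans ?_
    refine (Finset.sum_le_card_nsmul _ _ e fun s _ => hxy (s, 0)).trans ?_
    rw [nsmul_eq_mul]
    gcongr
    simpa using Finset.card_le_univ (S.erase i)
  have hdi := abs_le.1 (hxy (i, 0))
  have hdj := abs_le.1 (hxy (j, 0))
  have hC' := abs_le.1 hC
  generalize ∑ s ∈ S.erase i, x (s, 0) = C at *
  generalize ∑ s ∈ S.erase i, y (s, 0) = C' at *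
  obtain ⟨d, hd⟩ : ∃ d, d = 2 - x (i, 0) - x (j, 0) := ⟨_, rfl⟩
  obtain ⟨d', hd'⟩ : ∃ d, d = 2 - y (i, 0) - y (j, 0) := ⟨_, rfl⟩
  have hdd : -(2 * e) ≤ d - d' ∧ d - d' ≤ 2 * e := by constructor <;> linarith
  rw [← hd] at hWx
  rw [← hd'] at hWy
  rw [← hd, ← hd']
  obtain ⟨μ, hp, h1, h2, h3⟩ := affine_coupling (C + max 0 (-d)) (2 - |d|)
    (C' + max 0 (-d')) (2 - |d'|) (by linarith) (by linarith)
  refine ⟨μ, hp, h1, h2, le_trans (ENNReal.ofReal_le_ofReal ?_) h3⟩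
  have b1 : |C + max 0 (-d) - (C' + max 0 (-d'))| ≤ (n + 2) * e := by
    rw [abs_le]
    rcases max_cases 0 (-d) with h | h <;> rcases max_cases 0 (-d') with h' | h' <;>
      constructor <;> linarith
  have b2 : |C + max 0 (-d) + (2 - |d|) - (C' + max 0 (-d') + (2 - |d'|))| ≤ (n + 2) * e := by
    rw [abs_le]
    rcases max_cases 0 (-d) with h | h <;> rcases max_cases 0 (-d') with h' | h' <;>
    rcases abs_cases d with g | g <;> rcases abs_cases d' with g' | g' <;>
      constructor <;> linarith
  have hM : 2 * t ≤ max (2 - |d|) (2 - |d'|) := le_max_of_le_left hWx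
  have hpow : (n : ℝ) ^ (b + 2 - a) * t = n ^ 2 * e := by
    rw [ht, he, ← Real.rpow_add hn0, ← Real.rpow_natCast, ← Real.rpow_add hn0]
    congr 1; push_cast; ring
  have hP : 0 < (n : ℝ) ^ (b + 2 - a) := Real.rpow_pos_of_pos hn0 _
  apply sub_le_sub_left
  rw [div_le_iff₀ (by linarith)]
  calc _ ≤ 2 * ((n + 2) * e) := by linarith
    _ ≤ 8 * (n ^ 2 * e) := by nlinarith
    _ = 4 * (n : ℝ) ^ (b + 2 - a) * (2 * t) := by rw [← hpow]; ring
    _ ≤ _ := by gcongr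

end
end

section
/- Let K be the symmetric stochastic matrix on G with K(g,g) = 1 − 1/n and off-diagonal mass 1/(nm) assigned from g to gr for each r ∈ R. Let β_2 = 1 − γ be the second-largest eigenvalue of K and let v be a corresponding real eigenvector with ‖v‖_2 = 1, normalized (replacing v by −v if necessary) so that ∑_{g : v[g] ≥ 0} v[g]² ≥ 1/2. Let w ∈ Δ_G maximize the inner product ⟨w', v⟩ over w' ∈ Δ_G, and let (X_t) be the Gibbs sampler on Δ_G started from X_0 = w. Then for every d > 0 and every integer t ≥ 0, P[⟨X_t, v⟩ > d] ≥ (1 − γ)^t − 2d√n. -/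
open MeasureTheory

noncomputable section

variable (G : Type*) [Group G] [Fintype G] [DecidableEq G] [MeasurableSpace G]
  [DiscreteMeasurableSpace G]

/-- The simplex of probability vectors indexed by `G`. -/
def simplexG : Set (G → ℝ) := {x | (∀ g, 0 ≤ x g) ∧ ∑ g, x g = 1}

/-- The uniform (normalized `(n-1)`-dimensional Hausdorff) measure on the simplex. -/
def UG : Measure (G → ℝ) :=
  (μH[(Fintype.card G : ℝ) - 1] (simplexG G))⁻¹ •
    (μH[(Fintype.card G : ℝ) - 1]).restrict (simplexG G)

/-- One step of the Gibbs sampler on the simplex from update datum `(g, r, λ)`. -/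
def gibbsStepG (x : G → ℝ) (u : G × G × ℝ) : G → ℝ := fun h =>
  if h = u.1 then u.2.2 * (x u.1 + x (u.1 * u.2.1))
  else if h = u.1 * u.2.1 then (1 - u.2.2) * (x u.1 + x (u.1 * u.2.1))
  else x h

/-- Law of the random update datum: `g` uniform on `G`, `r` uniform on `R`,
`λ` uniform on `[0,1]`. -/
def driveG (R : Finset G) : Measure (G × G × ℝ) :=
  (unifOn (Finset.univ : Finset G)).prod
    ((unifOn R).prod ((volume : Measure ℝ).restrict (Set.Icc 0 1)))

/-- Law of the Gibbs sampler after `T` steps started at `x`. -/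
def lawG (R : Finset G) (x : G → ℝ) (T : ℕ) : Measure (G → ℝ) :=
  Measure.map (fun ω : Fin T → G × G × ℝ => (List.ofFn ω).foldl (gibbsStepG G) x)
    (Measure.pi fun _ => driveG G R)

/-- The transition matrix of the slowed simple random walk on `G`. -/
def KhatM (R : Finset G) : G → G → ℝ := fun z w =>
  if z = w then 1 - 2 / (Fintype.card G : ℝ)
  else if z⁻¹ * w ∈ R then 2 / ((Fintype.card G : ℝ) * R.card) else 0

/-- The spectral gap `γ̂ = 1 - λ̂₂` of `K̂`, with the second-largest eigenvalue
expressed by the variational (Courant–Fischer) characterization. -/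
def gapHat (R : Finset G) : ℝ :=
  1 - sSup {lam : ℝ | ∃ v : G → ℝ, ∑ g, v g = 0 ∧ ∑ g, (v g) ^ 2 = 1 ∧
    lam = ∑ g, ∑ h, v g * KhatM G R g h * v h}


/-- The edge-based random-walk transition matrix on `G`: `K(g,g) = 1 - 1/n` and
`K(g, gr) = 1/(nm)` for `r ∈ R`. -/
def Kmat (R : Finset G) : G → G → ℝ := fun g h =>
  if g = h then 1 - 1 / (Fintype.card G : ℝ)
  else if g⁻¹ * h ∈ R then 1 / ((Fintype.card G : ℝ) * R.card) else 0

/-- The second-largest eigenvalue `β₂` of `K`, via the variational (Courant–Fischer)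
characterization over vectors orthogonal to the constants. -/
def beta2 (R : Finset G) : ℝ :=
  sSup {lam : ℝ | ∃ v : G → ℝ, ∑ g, v g = 0 ∧ ∑ g, (v g) ^ 2 = 1 ∧
    lam = ∑ g, ∑ h, v g * Kmat G R g h * v h}

/-- The pairing of the state with a vector. -/
def pairG (v x : G → ℝ) : ℝ := ∑ g, x g * v g

/-- Admissible update data. -/
def goodG (R : Finset G) (u : G × G × ℝ) : Prop := u.2.1 ∈ R ∧ u.2.2 ∈ Set.Icc (0 : ℝ) 1

theorem unifOn_prob {α : Type*} [MeasurableSpace α] (s : Finset α) (hs : s.Nonempty) :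
    IsProbabilityMeasure (unifOn s) := by
  constructor
  unfold unifOn
  simp only [Measure.smul_apply, Measure.finset_sum_apply, measure_univ, Finset.sum_const,
    smul_eq_mul, nsmul_eq_mul, mul_one]
  exact ENNReal.inv_mul_cancel (by simpa using hs.ne_empty) (by simp)

theorem unifOn_integral {α : Type*} [MeasurableSpace α] [DiscreteMeasurableSpace α]
    (s : Finset α) (f : α → ℝ) :
    ∫ a, f a ∂(unifOn s) = (s.card : ℝ)⁻¹ * ∑ a ∈ s, f a := by
  unfold unifOn
  rw [integral_smul_measure, integral_finset_sum_measure]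
  · simp [integral_dirac]
  · intro i _
    exact integrable_dirac (by simp)

theorem unifOn_ae {α : Type*} [MeasurableSpace α] [DiscreteMeasurableSpace α]
    (s : Finset α) : ∀ᵐ a ∂(unifOn s), a ∈ s := by
  rw [ae_iff]
  unfold unifOn
  simp only [Measure.smul_apply, Measure.finset_sum_apply, smul_eq_mul, mul_eq_zero]
  right
  refine Finset.sum_eq_zero fun a ha => ?_
  rw [Measure.dirac_apply' _ (MeasurableSet.of_discrete)]
  simp [ha]

theorem driveG_prob (R : Finset G) (hne : R.Nonempty) : IsProbabilityMeasure (driveG G R) := by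
  haveI := unifOn_prob R hne
  haveI := unifOn_prob (Finset.univ : Finset G) ⟨1, Finset.mem_univ _⟩
  haveI : IsProbabilityMeasure ((volume : Measure ℝ).restrict (Set.Icc 0 1)) := ⟨by simp⟩
  unfold driveG
  infer_instance

theorem driveG_good (R : Finset G) (hne : R.Nonempty) : ∀ᵐ u ∂(driveG G R), goodG G R u := by
  haveI := unifOn_prob R hne
  haveI := unifOn_prob (Finset.univ : Finset G) ⟨1, Finset.mem_univ _⟩
  haveI : IsProbabilityMeasure ((volume : Measure ℝ).restrict (Set.Icc 0 1)) := ⟨by simp⟩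
  have h2 : ∀ᵐ q ∂((unifOn R).prod ((volume : Measure ℝ).restrict (Set.Icc 0 1))),
      q.1 ∈ R ∧ q.2 ∈ Set.Icc (0 : ℝ) 1 := by
    refine Filter.Eventually.and ?_ ?_
    · exact Measure.quasiMeasurePreserving_fst.ae (unifOn_ae R)
    · exact Measure.quasiMeasurePreserving_snd.ae (ae_restrict_mem measurableSet_Icc)
  unfold driveG
  exact Measure.quasiMeasurePreserving_snd.ae h2

theorem step_pair (v x : G → ℝ) (u : G × G × ℝ) (hu : u.2.1 ≠ 1) :
    pairG G v (gibbsStepG G x u) = pairG G v x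
      + (u.2.2 * (x u.1 + x (u.1 * u.2.1)) - x u.1) * v u.1
      + ((1 - u.2.2) * (x u.1 + x (u.1 * u.2.1)) - x (u.1 * u.2.1)) * v (u.1 * u.2.1) := by
  obtain ⟨g, r, l⟩ := u
  have hgr : g * r ≠ g := by simpa using hu
  simp only [pairG]
  have : ∀ h, gibbsStepG G x (g, r, l) h * v h = x h * v h
      + (if h = g then (l * (x g + x (g * r)) - x g) * v g else 0)
      + (if h = g * r then ((1 - l) * (x g + x (g * r)) - x (g * r)) * v (g * r) else 0) := by
    intro h
    simp only [gibbsStepG]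
    by_cases h1 : h = g
    · subst h1
      simp [hgr.symm]
      ring
    · by_cases h2 : h = g * r
      · subst h2
        simp [h1]
        ring
      · simp [h1, h2]
  simp only [this, Finset.sum_add_distrib, Finset.sum_ite_eq', Finset.mem_univ, if_true]

theorem step_mem (R : Finset G) (hid : (1 : G) ∉ R) (x : G → ℝ) (hx : x ∈ simplexG G)
    (u : G × G × ℝ) (hu : goodG G R u) : gibbsStepG G x u ∈ simplexG G := by
  have hr : u.2.1 ≠ 1 := fun h => hid (h ▸ hu.1)
  have h0 := hu.2.1
  have h1 := hu.2.2
  refine ⟨fun h => ?_, ?_⟩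
  · have ha := hx.1 u.1
    have hb := hx.1 (u.1 * u.2.1)
    unfold gibbsStepG
    split_ifs
    · exact mul_nonneg h0 (by linarith)
    · exact mul_nonneg (by linarith) (by linarith)
    · exact hx.1 h
  · have := step_pair G (fun _ => 1) x u hr
    simp only [pairG, mul_one, hx.2] at this
    rw [this]
    ring

theorem fold_mem (R : Finset G) (hid : (1 : G) ∉ R) (l : List (G × G × ℝ)) :
    ∀ (x : G → ℝ), x ∈ simplexG G → (∀ u ∈ l, goodG G R u) →
      l.foldl (gibbsStepG G) x ∈ simplexG G := by
  induction l with
  | nil => intro x hx _; simpa using hx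
  | cons a l ih =>
    intro x hx hl
    simp only [List.foldl_cons]
    exact ih _ (step_mem G R hid x hx a (hl a (by simp))) (fun u hu => hl u (by simp [hu]))

theorem step_meas : Measurable fun p : (G → ℝ) × (G × G × ℝ) => gibbsStepG G p.1 p.2 := by
  have key : ∀ f : (G → ℝ) × (G × G × ℝ) → G, Measurable f →
      Measurable fun p : (G → ℝ) × (G × G × ℝ) => p.1 (f p) := by
    intro f hf
    have : (fun p : (G → ℝ) × (G × G × ℝ) => p.1 (f p))
        = fun p => ∑ k, if f p = k then p.1 k else 0 := by
      funext p
      simp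
    rw [this]
    refine Finset.measurable_sum _ fun k _ => ?_
    refine Measurable.ite (hf (MeasurableSet.of_discrete (s := {k}))) ?_ measurable_const
    exact (measurable_pi_apply k).comp measurable_fst
  have hg : Measurable fun p : (G → ℝ) × (G × G × ℝ) => p.2.1 := by fun_prop
  have hgr : Measurable fun p : (G → ℝ) × (G × G × ℝ) => p.2.1 * p.2.2.1 := by
    have h2 : Measurable fun q : G × G => q.1 * q.2 := measurable_of_countable _
    exact h2.comp (f := fun p : (G → ℝ) × (G × G × ℝ) => (p.2.1, p.2.2.1)) (by fun_prop)
  have hl : Measurable fun p : (G → ℝ) × (G × G × ℝ) => p.2.2.2 := by fun_prop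
  refine measurable_pi_lambda _ fun h => ?_
  unfold gibbsStepG
  have k1 := key _ hg
  have k2 := key _ hgr
  have s1 : MeasurableSet {p : (G → ℝ) × (G × G × ℝ) | h = p.2.1} := by
    have := hg (MeasurableSet.of_discrete (s := {k | h = k}))
    exact this
  have s2 : MeasurableSet {p : (G → ℝ) × (G × G × ℝ) | h = p.2.1 * p.2.2.1} := by
    have := hgr (MeasurableSet.of_discrete (s := {k | h = k}))
    exact this
  refine Measurable.ite s1 (hl.mul (k1.add k2)) (Measurable.ite s2 ?_ ?_)
  · exact (measurable_const.sub hl).mul (k1.add k2)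
  · exact (measurable_pi_apply h).comp measurable_fst

theorem fold_meas (T : ℕ) : Measurable fun p : (G → ℝ) × (Fin T → G × G × ℝ) =>
    (List.ofFn p.2).foldl (gibbsStepG G) p.1 := by
  induction T with
  | zero => simpa using measurable_fst
  | succ T ih =>
    simp only [List.ofFn_succ, List.foldl_cons]
    refine ih.comp (f := fun p : (G → ℝ) × (Fin (T + 1) → G × G × ℝ) =>
      (gibbsStepG G p.1 (p.2 0), fun i => p.2 i.succ)) ?_
    refine Measurable.prodMk ?_ ?_
    · exact (step_meas G).comp (f := fun p : (G → ℝ) × (Fin (T + 1) → G × G × ℝ) =>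
        (p.1, p.2 0)) (by fun_prop)
    · fun_prop

theorem pair_meas (v : G → ℝ) : Measurable (pairG G v) := by
  unfold pairG
  fun_prop

theorem pair_bound (v x : G → ℝ) (hx : x ∈ simplexG G) : ‖pairG G v x‖ ≤ ∑ g, |v g| := by
  unfold pairG
  refine (norm_sum_le _ _).trans (Finset.sum_le_sum fun g _ => ?_)
  rw [norm_mul, Real.norm_eq_abs, Real.norm_eq_abs, abs_of_nonneg (hx.1 g)]
  have : x g ≤ 1 := by
    rw [← hx.2]
    exact Finset.single_le_sum (fun i _ => hx.1 i) (Finset.mem_univ g)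
  exact mul_le_of_le_one_left (abs_nonneg _) this

theorem Kmat_apply (R : Finset G) (hid : (1 : G) ∉ R) (v : G → ℝ) (g : G) :
    ∑ h, Kmat G R g h * v h = (1 - 1 / (Fintype.card G : ℝ)) * v g
      + 1 / ((Fintype.card G : ℝ) * R.card) * ∑ r ∈ R, v (g * r) := by
  have e : ∀ h, Kmat G R g h * v h = (if h = g then (1 - 1 / (Fintype.card G : ℝ)) * v g else 0)
      + (if g⁻¹ * h ∈ R then 1 / ((Fintype.card G : ℝ) * R.card) * v h else 0) := by
    intro h
    unfold Kmat
    by_cases h1 : g = h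
    · subst h1
      simp [hid]
    · simp [h1, Ne.symm h1]
  simp only [e, Finset.sum_add_distrib, Finset.sum_ite_eq', Finset.mem_univ, if_true]
  congr 1
  rw [← Equiv.sum_comp (Equiv.mulLeft g)]
  simp [Finset.mul_sum]

theorem dirichlet (R : Finset G) (hsym : ∀ r ∈ R, r⁻¹ ∈ R) (v x : G → ℝ) :
    ∑ g, ∑ r ∈ R, x (g * r) * v g = ∑ g, ∑ r ∈ R, x g * v (g * r) := by
  rw [Finset.sum_comm, Finset.sum_comm (s := Finset.univ)]
  refine Finset.sum_bij (fun r _ => r⁻¹) hsym (by simp) (fun r hr => ⟨r⁻¹, hsym r hr, by simp⟩) ?_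
  intro r _
  rw [← Equiv.sum_comp (Equiv.mulRight r) (fun g => x g * v (g * r⁻¹))]
  simp

theorem lin_int (a b : ℝ) :
    ∫ l in Set.Icc (0 : ℝ) 1, (a + b * l) = a + b / 2 := by
  rw [integral_Icc_eq_integral_Ioc, ← intervalIntegral.integral_of_le zero_le_one,
    intervalIntegral.integral_add (by simp) (Continuous.intervalIntegrable (by fun_prop) _ _),
    intervalIntegral.integral_const_mul, integral_id]
  simp
  ring

theorem step_integrable (R : Finset G) (hid : (1 : G) ∉ R) (hne : R.Nonempty) (v x : G → ℝ)
    (hx : x ∈ simplexG G) :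
    Integrable (fun u => pairG G v (gibbsStepG G x u)) (driveG G R) := by
  haveI := driveG_prob G R hne
  refine Integrable.of_bound (C := ∑ g, |v g|) ?_ ?_
  · refine Measurable.aestronglyMeasurable ?_
    exact (pair_meas G v).comp ((step_meas G).comp (measurable_const.prodMk measurable_id))
  · filter_upwards [driveG_good G R hne] with u hu
    exact pair_bound G v _ (step_mem G R hid x hx u hu)

theorem step_integral (R : Finset G) (hsym : ∀ r ∈ R, r⁻¹ ∈ R) (hid : (1 : G) ∉ R)
    (hne : R.Nonempty) (v x : G → ℝ) (hx : x ∈ simplexG G) :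
    ∫ u, pairG G v (gibbsStepG G x u) ∂(driveG G R) =
      pairG G (fun g => ∑ h, Kmat G R g h * v h) x := by
  haveI := unifOn_prob R hne
  haveI := unifOn_prob (Finset.univ : Finset G) ⟨1, Finset.mem_univ _⟩
  haveI : IsProbabilityMeasure ((volume : Measure ℝ).restrict (Set.Icc 0 1)) := ⟨by simp⟩
  have hint := step_integrable G R hid hne v x hx
  unfold driveG at hint ⊢
  have hinner : ∀ g : G, Integrable (fun q : G × ℝ => pairG G v (gibbsStepG G x (g, q)))
      ((unifOn R).prod ((volume : Measure ℝ).restrict (Set.Icc 0 1))) := by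
    intro g
    refine Integrable.of_bound (C := ∑ g, |v g|) ?_ ?_
    · refine Measurable.aestronglyMeasurable ?_
      exact (pair_meas G v).comp ((step_meas G).comp
        (measurable_const.prodMk (measurable_const.prodMk measurable_id)))
    · have h1 : ∀ᵐ q ∂((unifOn R).prod ((volume : Measure ℝ).restrict (Set.Icc 0 1))),
          q.1 ∈ R ∧ q.2 ∈ Set.Icc (0 : ℝ) 1 := by
        refine Filter.Eventually.and ?_ ?_
        · exact Measure.quasiMeasurePreserving_fst.ae (unifOn_ae R)
        · exact Measure.quasiMeasurePreserving_snd.ae (ae_restrict_mem measurableSet_Icc)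
      filter_upwards [h1] with q hq
      exact pair_bound G v _ (step_mem G R hid x hx (g, q) hq)
  rw [integral_prod _ hint, unifOn_integral]
  have hn : (Fintype.card G : ℝ) ≠ 0 := by
    have := Fintype.card_ne_zero (α := G)
    exact_mod_cast this
  have hm : (R.card : ℝ) ≠ 0 := by
    have := hne.card_pos
    positivity
  have hterm : ∀ g : G, ∫ q, pairG G v (gibbsStepG G x (g, q))
      ∂((unifOn R).prod ((volume : Measure ℝ).restrict (Set.Icc 0 1))) =
      (R.card : ℝ)⁻¹ * ∑ r ∈ R, (pairG G v x
        + (x (g * r) * v g + x g * v (g * r) - x g * v g - x (g * r) * v (g * r)) / 2) := by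
    intro g
    rw [integral_prod _ (hinner g), unifOn_integral]
    congr 1
    refine Finset.sum_congr rfl fun r hr => ?_
    have hr1 : r ≠ 1 := fun h => hid (h ▸ hr)
    have : ∀ l : ℝ, pairG G v (gibbsStepG G x (g, r, l)) =
        (pairG G v x - x g * v g + x g * v (g * r))
          + ((x g + x (g * r)) * (v g - v (g * r))) * l := by
      intro l
      rw [step_pair G v x (g, r, l) hr1]
      ring
    simp only [this]
    rw [lin_int]
    ring
  simp only [hterm]
  rw [← Finset.mul_sum]
  simp only [Finset.sum_add_distrib, ← Finset.sum_div, Finset.sum_sub_distrib]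
  have hshift : ∑ g, ∑ r ∈ R, x (g * r) * v (g * r) = R.card * pairG G v x := by
    rw [Finset.sum_comm]
    have : ∀ r : G, ∑ g, x (g * r) * v (g * r) = pairG G v x := fun r =>
      Equiv.sum_comp (Equiv.mulRight r) (fun g => x g * v g)
    simp [this]
  have hdiag : ∑ g, ∑ r ∈ R, x g * v g = R.card * pairG G v x := by
    simp only [Finset.sum_const, nsmul_eq_mul, ← Finset.mul_sum, pairG]
  rw [hshift, hdiag, dirichlet G R hsym v x]
  have hR : pairG G (fun g => ∑ h, Kmat G R g h * v h) x =
      (1 - 1 / (Fintype.card G : ℝ)) * pairG G v x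
      + 1 / ((Fintype.card G : ℝ) * R.card) * ∑ g, ∑ r ∈ R, x g * v (g * r) := by
    simp only [Kmat_apply G R hid v]
    simp only [pairG, mul_add, Finset.sum_add_distrib, Finset.mul_sum]
    congr 1
    · exact Finset.sum_congr rfl fun g _ => by ring
    · exact Finset.sum_congr rfl fun g _ => Finset.sum_congr rfl fun r _ => by ring
  rw [hR]
  simp only [Finset.sum_const, nsmul_eq_mul, Finset.card_univ]
  field_simp
  ring

theorem pi_good (R : Finset G) (hne : R.Nonempty) (T : ℕ) :
    ∀ᵐ ω ∂(Measure.pi fun _ : Fin T => driveG G R), ∀ i, goodG G R (ω i) := by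
  haveI := driveG_prob G R hne
  rw [ae_all_iff]
  intro i
  exact (Measure.tendsto_eval_ae_ae (μ := fun _ : Fin T => driveG G R) (i := i)).eventually
    (driveG_good G R hne)

theorem fold_ae_mem (R : Finset G) (hid : (1 : G) ∉ R) (hne : R.Nonempty) (x : G → ℝ)
    (hx : x ∈ simplexG G) (T : ℕ) :
    ∀ᵐ ω ∂(Measure.pi fun _ : Fin T => driveG G R),
      (List.ofFn ω).foldl (gibbsStepG G) x ∈ simplexG G := by
  filter_upwards [pi_good G R hne T] with ω hω
  refine fold_mem G R hid _ x hx ?_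
  intro u hu
  rw [List.mem_ofFn] at hu
  obtain ⟨i, rfl⟩ := hu
  exact hω i

theorem fold_integrable (R : Finset G) (hid : (1 : G) ∉ R) (hne : R.Nonempty) (v x : G → ℝ)
    (hx : x ∈ simplexG G) (T : ℕ) :
    Integrable (fun ω : Fin T → G × G × ℝ => pairG G v ((List.ofFn ω).foldl (gibbsStepG G) x))
      (Measure.pi fun _ => driveG G R) := by
  haveI := driveG_prob G R hne
  refine Integrable.of_bound (C := ∑ g, |v g|) ?_ ?_
  · refine Measurable.aestronglyMeasurable ?_
    exact (pair_meas G v).comp ((fold_meas G T).comp (measurable_const.prodMk measurable_id))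
  · filter_upwards [fold_ae_mem G R hid hne x hx T] with ω hω
    exact pair_bound G v _ hω

theorem fold_integral (R : Finset G) (hsym : ∀ r ∈ R, r⁻¹ ∈ R) (hid : (1 : G) ∉ R)
    (hne : R.Nonempty) (v : G → ℝ) (β : ℝ) (heig : ∀ g, ∑ h, Kmat G R g h * v h = β * v g)
    (T : ℕ) : ∀ x ∈ simplexG G,
    ∫ ω : Fin T → G × G × ℝ, pairG G v ((List.ofFn ω).foldl (gibbsStepG G) x)
      ∂(Measure.pi fun _ => driveG G R) = β ^ T * pairG G v x := by
  haveI := driveG_prob G R hne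
  induction T with
  | zero => intro x _; simp
  | succ T ih =>
    intro x hx
    have hmp := measurePreserving_piFinSuccAbove (fun _ : Fin (T + 1) => driveG G R) 0
    have hcomp := hmp.integral_comp (MeasurableEquiv.measurableEmbedding _)
      (fun p : (G × G × ℝ) × (Fin T → G × G × ℝ) =>
        pairG G v ((List.ofFn p.2).foldl (gibbsStepG G) (gibbsStepG G x p.1)))
    have hint := fold_integrable G R hid hne v x hx (T + 1)
    have hint2 : Integrable (fun p : (G × G × ℝ) × (Fin T → G × G × ℝ) =>
        pairG G v ((List.ofFn p.2).foldl (gibbsStepG G) (gibbsStepG G x p.1)))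
        ((driveG G R).prod (Measure.pi fun _ => driveG G R)) := by
      rw [← hmp.integrable_comp_emb (MeasurableEquiv.measurableEmbedding _)]
      refine hint.congr (Filter.Eventually.of_forall fun ω => ?_)
      simp [List.ofFn_succ, MeasurableEquiv.piFinSuccAbove, Fin.tail_def]
    have e1 : ∫ ω : Fin (T + 1) → G × G × ℝ, pairG G v ((List.ofFn ω).foldl (gibbsStepG G) x)
        ∂(Measure.pi fun _ => driveG G R) =
        ∫ p, pairG G v ((List.ofFn p.2).foldl (gibbsStepG G) (gibbsStepG G x p.1))
          ∂((driveG G R).prod (Measure.pi fun _ : Fin T => driveG G R)) := by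
      rw [← hcomp]
      refine integral_congr_ae (Filter.Eventually.of_forall fun ω => ?_)
      simp [List.ofFn_succ, MeasurableEquiv.piFinSuccAbove, Fin.tail_def]
    rw [e1, integral_prod _ hint2]
    have e2 : ∫ u, ∫ ω : Fin T → G × G × ℝ,
        pairG G v ((List.ofFn ω).foldl (gibbsStepG G) (gibbsStepG G x u))
          ∂(Measure.pi fun _ => driveG G R) ∂(driveG G R) =
        ∫ u, β ^ T * pairG G v (gibbsStepG G x u) ∂(driveG G R) := by
      refine integral_congr_ae ?_
      filter_upwards [driveG_good G R hne] with u hu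
      exact ih _ (step_mem G R hid x hx u hu)
    rw [e2, integral_const_mul, step_integral G R hsym hid hne v x hx]
    simp only [heig]
    have : pairG G (fun g => β * v g) x = β * pairG G v x := by
      simp only [pairG, Finset.mul_sum]
      exact Finset.sum_congr rfl fun g _ => by ring
    rw [this]
    ring

theorem max_lower (v w : G → ℝ)
    (hsign : 1 / 2 ≤ ∑ g ∈ Finset.univ.filter fun g => 0 ≤ v g, (v g) ^ 2)
    (hmax : ∀ w' ∈ simplexG G, pairG G v w' ≤ pairG G v w) :
    0 < pairG G v w ∧ 1 ≤ 2 * Real.sqrt (Fintype.card G) * pairG G v w := by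
  set M := pairG G v w with hM
  have hle : ∀ g, v g ≤ M := by
    intro g
    have := hmax (Pi.single g 1) ⟨fun h => by
      by_cases hh : h = g
      · subst hh; simp
      · simp [hh], by simp⟩
    simpa [pairG, Pi.single_apply] using this
  have hM0 : 0 < M := by
    by_contra hcon
    have : ∑ g ∈ Finset.univ.filter (fun g => 0 ≤ v g), (v g) ^ 2 = 0 := by
      refine Finset.sum_eq_zero fun g hg => ?_
      have h1 := (Finset.mem_filter.1 hg).2
      have h2 := hle g
      have : v g = 0 := by linarith
      simp [this]
    linarith
  refine ⟨hM0, ?_⟩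
  have h1 : ∑ g ∈ Finset.univ.filter (fun g => 0 ≤ v g), (v g) ^ 2
      ≤ (Fintype.card G : ℝ) * M ^ 2 := by
    calc ∑ g ∈ Finset.univ.filter (fun g => 0 ≤ v g), (v g) ^ 2
        ≤ ∑ g ∈ Finset.univ.filter (fun g => 0 ≤ v g), M ^ 2 :=
          Finset.sum_le_sum fun g hg =>
            pow_le_pow_left₀ (Finset.mem_filter.1 hg).2 (hle g) 2
      _ ≤ ∑ g : G, M ^ 2 :=
          Finset.sum_le_sum_of_subset_of_nonneg (Finset.filter_subset _ _)
            (fun _ _ _ => sq_nonneg _)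
      _ = (Fintype.card G : ℝ) * M ^ 2 := by simp
  have h2 : Real.sqrt (Fintype.card G) ^ 2 = (Fintype.card G : ℝ) :=
    Real.sq_sqrt (Nat.cast_nonneg _)
  have h3 := Real.sqrt_nonneg (Fintype.card G : ℝ)
  rw [← h2] at h1
  have h4 : 0 ≤ Real.sqrt (Fintype.card G) * M := mul_nonneg h3 hM0.le
  nlinarith

/-- Lower-bound mechanism: starting the Gibbs sampler on the simplex from the maximizer `w`
of `⟨·, v⟩`, where `v` is a unit eigenvector of `K` for `β₂ = 1 - γ`,
`P[⟨X_t, v⟩ > d] ≥ (1 - γ)^t - 2 d √n`. -/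
theorem gibbs_sampler_cayley_eigenvector_lower_bound
    (R : Finset G) (hsym : ∀ r ∈ R, r⁻¹ ∈ R) (hid : (1 : G) ∉ R) (hne : R.Nonempty)
    (hgen : Subgroup.closure (R : Set G) = ⊤)
    (v : G → ℝ)
    (heig : ∀ g, ∑ h, Kmat G R g h * v h = beta2 G R * v g)
    (hnorm : ∑ g, (v g) ^ 2 = 1)
    (hsign : 1 / 2 ≤ ∑ g ∈ Finset.univ.filter fun g => 0 ≤ v g, (v g) ^ 2)
    (w : G → ℝ) (hw : w ∈ simplexG G)
    (hmax : ∀ w' ∈ simplexG G, ∑ g, w' g * v g ≤ ∑ g, w g * v g)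
    (d : ℝ) (hd : 0 < d) (t : ℕ) :
    ENNReal.ofReal ((1 - (1 - beta2 G R)) ^ t -
        2 * d * Real.sqrt (Fintype.card G)) ≤
      lawG G R w t {x | d < ∑ g, x g * v g} := by
  haveI := driveG_prob G R hne
  obtain ⟨hM0, hM1⟩ := max_lower G v w hsign hmax
  have hI := fold_integral G R hsym hid hne v (beta2 G R) heig t w hw
  have hint := fold_integrable G R hid hne v w hw t
  have hfm : Measurable fun ω : Fin t → G × G × ℝ => (List.ofFn ω).foldl (gibbsStepG G) w :=
    (fold_meas G t).comp (measurable_const.prodMk measurable_id)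
  have hS : MeasurableSet {x : G → ℝ | d < ∑ g, x g * v g} :=
    measurableSet_lt measurable_const (pair_meas G v)
  unfold lawG
  rw [Measure.map_apply hfm hS]
  set μ := (Measure.pi fun _ : Fin t => driveG G R) with hμ
  set A := (fun ω : Fin t → G × G × ℝ => (List.ofFn ω).foldl (gibbsStepG G) w) ⁻¹'
    {x | d < ∑ g, x g * v g} with hA
  have hAm : MeasurableSet A := hfm hS
  set M := pairG G v w with hM
  have hkey : beta2 G R ^ t * M ≤ d + M * μ.real A := by
    rw [← hI]
    have e : ∫ ω, (d + A.indicator (fun _ => M) ω) ∂μ = d + M * μ.real A := by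
      rw [integral_add (integrable_const _) ((integrable_const _).indicator hAm),
        integral_indicator_const _ hAm]
      simp [mul_comm]
    rw [← e]
    refine integral_mono_ae hint
      ((integrable_const _).add ((integrable_const _).indicator hAm)) ?_
    filter_upwards [fold_ae_mem G R hid hne w hw t] with ω hω
    by_cases hωA : ω ∈ A
    · simp only [Set.indicator_of_mem hωA]
      have := hmax _ hω
      change pairG G v _ ≤ M at this
      linarith
    · simp only [Set.indicator_of_notMem hωA, add_zero]
      exact not_lt.1 hωA
  rw [ENNReal.ofReal_le_iff_le_toReal (measure_ne_top μ A)]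
  change _ ≤ μ.real A
  have h1 : d ≤ 2 * d * Real.sqrt (Fintype.card G) * M := by nlinarith
  have h2 : (beta2 G R ^ t - 2 * d * Real.sqrt (Fintype.card G)) * M ≤ μ.real A * M := by
    nlinarith
  have h3 := le_of_mul_le_mul_right h2 hM0
  simpa using h3

end
end

section
/- Let x ∈ Δ_G and let X_1 be obtained from X_0 = x by one step of the Gibbs sampler on Δ_G. Then for every h ∈ G, E[X_1[h]] = (1 − 1/n)·x[h] + (1/(nm))·∑_{r∈R} x[hr]. -/
open MeasureTheory

noncomputable section

variable (G : Type*) [Group G] [Fintype G] [DecidableEq G] [MeasurableSpace G]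
  [DiscreteMeasurableSpace G]

lemma finset_sum_prod_aux {α β : Type*} [MeasurableSpace α] [MeasurableSpace β]
    (s : Finset α) (ν : Measure β) [SFinite ν] :
    (∑ a ∈ s, Measure.dirac a).prod ν = ∑ a ∈ s, ν.map (Prod.mk a) := by
  classical
  induction s using Finset.induction_on with
  | empty => simp
  | insert a s ha ih =>
    haveI : SFinite (∑ a ∈ s, Measure.dirac a) := by
      rw [← Measure.sum_coe_finset]; infer_instance
    rw [Finset.sum_insert ha, Finset.sum_insert ha, Measure.add_prod, ih, Measure.dirac_prod]

lemma unifOn_prod_aux {α β : Type*} [MeasurableSpace α] [MeasurableSpace β]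
    [MeasurableSingletonClass α]
    (s : Finset α) (hs : s.Nonempty) (ν : Measure β) [SFinite ν] (f : α × β → ℝ)
    (hf : ∀ a, Integrable (fun y => f (a, y)) ν) :
    Integrable f ((unifOn s).prod ν) ∧
    ∫ u, f u ∂((unifOn s).prod ν) = (s.card : ℝ)⁻¹ * ∑ a ∈ s, ∫ y, f (a, y) ∂ν := by
  have hi : ∀ a ∈ s, Integrable f (ν.map (Prod.mk a)) := fun a _ =>
    ((measurableEmbedding_prodMk_left a).integrable_map_iff).2 (hf a)
  have hc : (s.card : ENNReal)⁻¹ ≠ ⊤ := by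
    simpa using hs.ne_empty
  unfold unifOn
  rw [Measure.prod_smul_left, finset_sum_prod_aux]
  refine ⟨Integrable.smul_measure (integrable_finsetSum_measure.2 hi) hc, ?_⟩
  rw [integral_smul_measure, integral_finsetSum_measure hi]
  simp only [ENNReal.toReal_inv, ENNReal.toReal_natCast, smul_eq_mul]
  congr 1
  exact Finset.sum_congr rfl fun a _ => (measurableEmbedding_prodMk_left a).integral_map f

lemma inner_aux (x : G → ℝ) (g r h : G) :
    IntegrableOn (fun l : ℝ => gibbsStepG G x (g, r, l) h) (Set.Icc 0 1) volume ∧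
    ∫ l in Set.Icc (0 : ℝ) 1, gibbsStepG G x (g, r, l) h =
      if h = g then (x g + x (g * r)) / 2
      else if h = g * r then (x g + x (g * r)) / 2 else x h := by
  constructor
  · apply Continuous.integrableOn_Icc
    unfold gibbsStepG
    dsimp only
    split_ifs <;> fun_prop
  · rw [integral_Icc_eq_integral_Ioc, ← intervalIntegral.integral_of_le zero_le_one]
    unfold gibbsStepG
    dsimp only
    split_ifs
    · rw [intervalIntegral.integral_mul_const, integral_id]; ring
    · rw [intervalIntegral.integral_mul_const, intervalIntegral.integral_sub (by simp) (by simp),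
        integral_id]
      norm_num; ring
    · simp

instance unifOn_sfinite_aux {α : Type*} [MeasurableSpace α] (s : Finset α) :
    SFinite (unifOn s) := by
  unfold unifOn
  rw [← Measure.sum_coe_finset]; infer_instance

lemma sum_aux (x : G → ℝ) (r h : G) (hr : r ≠ 1) :
    ∑ g, (if h = g then (x g + x (g * r)) / 2
      else if h = g * r then (x g + x (g * r)) / 2 else x h) =
    ((Fintype.card G : ℝ) - 1) * x h + (x (h * r) + x (h * r⁻¹)) / 2 := by
  have key : ∀ g, (if h = g then (x g + x (g * r)) / 2
      else if h = g * r then (x g + x (g * r)) / 2 else x h) =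
      x h + (if h = g then (x (h * r) - x h) / 2 else 0)
        + (if h * r⁻¹ = g then (x (h * r⁻¹) - x h) / 2 else 0) := by
    intro g
    by_cases h1 : h = g
    · subst h1
      simp [hr]; ring
    · by_cases h2 : h = g * r
      · subst h2
        simp [hr]; ring
      · have h3 : ¬ h * r⁻¹ = g := fun e => h2 (by rw [← e]; group)
        simp [h1, h2, h3]
  simp only [key, Finset.sum_add_distrib, Finset.sum_ite_eq, Finset.mem_univ, if_true,
    Finset.sum_const, Finset.card_univ, nsmul_eq_mul]
  ring

/-- One-step expectation of the Gibbs sampler on the simplex: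
`E[X₁[h]] = (1 - 1/n) x[h] + (1/(nm)) ∑_{r ∈ R} x[hr]`. -/
theorem gibbs_sampler_cayley_one_step_mean
    (R : Finset G) (hsym : ∀ r ∈ R, r⁻¹ ∈ R) (hid : (1 : G) ∉ R) (hne : R.Nonempty)
    (hgen : Subgroup.closure (R : Set G) = ⊤)
    (x : G → ℝ) (hx : x ∈ simplexG G) (h : G) :
    ∫ u, gibbsStepG G x u h ∂(driveG G R) =
      (1 - 1 / (Fintype.card G : ℝ)) * x h +
        1 / ((Fintype.card G : ℝ) * R.card) * ∑ r ∈ R, x (h * r) := by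
  have hn : (Fintype.card G : ℝ) ≠ 0 := by
    exact_mod_cast Fintype.card_ne_zero
  have hm : (R.card : ℝ) ≠ 0 := by
    exact_mod_cast hne.card_pos.ne'
  have hin := fun g => unifOn_prod_aux R hne ((volume : Measure ℝ).restrict (Set.Icc 0 1))
    (fun p : G × ℝ => gibbsStepG G x (g, p.1, p.2) h) (fun r => (inner_aux G x g r h).1)
  have hinv : ∑ r ∈ R, x (h * r⁻¹) = ∑ r ∈ R, x (h * r) :=
    Finset.sum_bij' (fun r _ => r⁻¹) (fun r _ => r⁻¹) hsym hsym (by simp) (by simp) (by simp)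
  unfold driveG
  rw [(unifOn_prod_aux Finset.univ Finset.univ_nonempty _
    (fun u => gibbsStepG G x u h) (fun g => (hin g).1)).2]
  simp only [fun g => (hin g).2, fun g r => (inner_aux G x g r h).2]
  rw [← Finset.mul_sum, Finset.sum_comm,
    Finset.sum_congr rfl (fun r hr => sum_aux G x r h (fun e => hid (e ▸ hr))),
    Finset.sum_add_distrib, ← Finset.sum_div, Finset.sum_add_distrib, hinv]
  simp only [Finset.sum_const, nsmul_eq_mul, Finset.card_univ]
  field_simp
  ring

end
end
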